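/- If F : U × U → ℂ (U ⊆ ℂ open) is holomorphic in each variable separately, and V ⊆ ℂ is open with ℝ ⊆ V and {e^{iθ} : θ ∈ V} ⊆ U, then the function (θ₁, θ₂) ↦ F(e^{iθ₁}, e^{iθ₂}) is holomorphic on V × V, and its restriction to ℝ² is real-analytic. -/

import Mathlib

open Complex
open scoped ENNReal

lemma sep_bdd_continuousAt {S T : Set ℂ} (hS : IsOpen S) (hT : IsOpen T) (f : ℂ × ℂ → ℂ) (M : ℝ)
    (h1 : ∀ w ∈ T, DifferentiableOn ℂ (fun z => f (z, w)) S)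
    (h2 : ∀ z ∈ S, DifferentiableOn ℂ (fun w => f (z, w)) T)
    (hM : ∀ z ∈ S, ∀ w ∈ T, ‖f (z, w)‖ ≤ M) {a b : ℂ} (ha : a ∈ S) (hb : b ∈ T) :
    ContinuousAt f (a, b) := by
  obtain ⟨r1, hr1, hr1S⟩ := Metric.isOpen_iff.1 hS a ha
  obtain ⟨r2, hr2, hr2T⟩ := Metric.isOpen_iff.1 hT b hb
  rw [ContinuousAt, tendsto_iff_dist_tendsto_zero]
  have key : ∀ᶠ p : ℂ × ℂ in nhds (a, b), dist (f p) (f (a, b)) ≤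
      (2 * M + 1) / r1 * dist p.1 a + (2 * M + 1) / r2 * dist p.2 b := by
    have hn : (Metric.ball a r1 ×ˢ Metric.ball b r2) ∈ nhds (a, b) :=
      prod_mem_nhds (Metric.ball_mem_nhds _ hr1) (Metric.ball_mem_nhds _ hr2)
    filter_upwards [hn] with p hp
    obtain ⟨z, w⟩ := p
    obtain ⟨hz, hw⟩ := hp
    simp only at hz hw ⊢
    refine (dist_triangle _ (f (a, w)) _).trans (add_le_add ?_ ?_)
    · refine Complex.dist_le_div_mul_dist_of_mapsTo_ball (f := fun z => f (z, w))
        ((h1 w (hr2T hw)).mono hr1S) ?_ hz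
      intro x hx
      simp only [Metric.mem_closedBall]
      have e1 := hM x (hr1S hx) w (hr2T hw)
      have e2 := hM a ha w (hr2T hw)
      rw [dist_eq_norm]
      linarith [norm_sub_le (f (x, w)) (f (a, w))]
    · refine Complex.dist_le_div_mul_dist_of_mapsTo_ball (f := fun w => f (a, w))
        ((h2 a ha).mono hr2T) ?_ hw
      intro x hx
      simp only [Metric.mem_closedBall]
      have e1 := hM a ha x (hr2T hx)
      have e2 := hM a ha b hb
      rw [dist_eq_norm]
      linarith [norm_sub_le (f (a, x)) (f (a, b))]
  refine squeeze_zero' (Filter.Eventually.of_forall fun _ => dist_nonneg) key ?_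
  have : ContinuousAt (fun p : ℂ × ℂ => (2 * M + 1) / r1 * dist p.1 a + (2 * M + 1) / r2 * dist p.2 b)
    (a, b) := by fun_prop
  simpa [ContinuousAt] using this

abbrev IccPi := ↥(Set.Icc (0 : ℝ) (2 * Real.pi))

noncomputable def nuPi : MeasureTheory.Measure IccPi :=
  MeasureTheory.Measure.comap Subtype.val MeasureTheory.volume

instance : MeasureTheory.IsFiniteMeasure nuPi := by
  constructor
  rw [nuPi, MeasureTheory.Measure.comap_apply _ Subtype.val_injective
    (fun s hs => (MeasurableEmbedding.subtype_coe measurableSet_Icc).measurableSet_image' hs) _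
    MeasurableSet.univ, Set.image_univ, Subtype.range_coe, Real.volume_Icc]
  exact ENNReal.ofReal_lt_top

noncomputable def torusCLM : C(IccPi × IccPi, ℂ) →L[ℂ] ℂ :=
  LinearMap.mkContinuous
    { toFun := fun φ => ∫ p : IccPi × IccPi, φ p ∂(nuPi.prod nuPi)
      map_add' := fun φ ψ => by
        simp only [ContinuousMap.add_apply]
        exact MeasureTheory.integral_add
          (φ.continuous.integrable_of_hasCompactSupport (HasCompactSupport.of_compactSpace _))
          (ψ.continuous.integrable_of_hasCompactSupport (HasCompactSupport.of_compactSpace _))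
      map_smul' := fun c φ => by
        simp only [ContinuousMap.smul_apply, RingHom.id_apply]
        exact MeasureTheory.integral_smul c φ }
    ((nuPi.prod nuPi).real Set.univ)
    (fun φ => by
      have := MeasureTheory.norm_integral_le_of_norm_le_const
        (μ := (nuPi.prod nuPi))
        (Filter.Eventually.of_forall fun p => φ.norm_coe_le_norm p)
      simp only [LinearMap.coe_mk, AddHom.coe_mk]
      exact this.trans_eq (mul_comm _ _))

lemma torusCLM_apply (φ : C(IccPi × IccPi, ℂ)) (g : ℝ → ℝ → ℂ)
    (h : ∀ p : IccPi × IccPi, φ p = g p.1 p.2) :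
    torusCLM φ = ∫ s in (0 : ℝ)..(2 * Real.pi), ∫ t in (0 : ℝ)..(2 * Real.pi), g s t := by
  change ∫ p : IccPi × IccPi, φ p ∂(nuPi.prod nuPi) = _
  rw [MeasureTheory.integral_prod]
  · rw [intervalIntegral.integral_of_le Real.two_pi_pos.le,
      ← MeasureTheory.integral_Icc_eq_integral_Ioc,
      ← MeasureTheory.integral_subtype_comap measurableSet_Icc]
    congr 1; ext s
    rw [intervalIntegral.integral_of_le Real.two_pi_pos.le,
      ← MeasureTheory.integral_Icc_eq_integral_Ioc,
      ← MeasureTheory.integral_subtype_comap measurableSet_Icc]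
    congr 1; ext t
    exact h (s, t)
  · exact (φ.continuous.integrable_of_hasCompactSupport (HasCompactSupport.of_compactSpace _))

lemma osgood {S T : Set ℂ} (hS : IsOpen S) (hT : IsOpen T) (f : ℂ × ℂ → ℂ) (M : ℝ)
    (h1 : ∀ w ∈ T, DifferentiableOn ℂ (fun z => f (z, w)) S)
    (h2 : ∀ z ∈ S, DifferentiableOn ℂ (fun w => f (z, w)) T)
    (hM : ∀ z ∈ S, ∀ w ∈ T, ‖f (z, w)‖ ≤ M) : AnalyticOnNhd ℂ f (S ×ˢ T) := by
  rintro ⟨a, b⟩ ⟨ha, hb⟩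
  simp only at ha hb
  obtain ⟨r1, hr1, hr1S⟩ := Metric.nhds_basis_closedBall.mem_iff.1 (hS.mem_nhds ha)
  obtain ⟨r2, hr2, hr2T⟩ := Metric.nhds_basis_closedBall.mem_iff.1 (hT.mem_nhds hb)
  have hcS : ∀ s, circleMap a r1 s ∈ S := fun s => hr1S (circleMap_mem_closedBall a hr1.le s)
  have hcT : ∀ s, circleMap b r2 s ∈ T := fun s => hr2T (circleMap_mem_closedBall b hr2.le s)
  let Z : C(IccPi × IccPi, ℂ) := ⟨fun p => circleMap a r1 p.1, by fun_prop⟩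
  let W : C(IccPi × IccPi, ℂ) := ⟨fun p => circleMap b r2 p.2, by fun_prop⟩
  let k : C(IccPi × IccPi, ℂ) := ⟨fun p => (2 * Real.pi * I : ℂ)⁻¹ * (2 * Real.pi * I : ℂ)⁻¹ *
      (deriv (circleMap a r1) p.1 * deriv (circleMap b r2) p.2) *
      f (circleMap a r1 p.1, circleMap b r2 p.2), by
    have : Continuous fun p : IccPi × IccPi => f (circleMap a r1 p.1, circleMap b r2 p.2) := by
      rw [continuous_iff_continuousAt]
      intro p
      have := sep_bdd_continuousAt hS hT f M h1 h2 hM (hcS p.1) (hcT p.2)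
      exact ContinuousAt.comp (f := fun p : IccPi × IccPi => (circleMap a r1 p.1, circleMap b r2 p.2))
        this (by fun_prop)
    simp only [deriv_circleMap]
    refine Continuous.mul (Continuous.mul continuous_const ?_) this
    fun_prop⟩
  have hunZ : ∀ z ∈ Metric.ball a r1, IsUnit (Z - z • (1 : C(IccPi × IccPi, ℂ))) := by
    intro z hz
    rw [ContinuousMap.isUnit_iff_forall_ne_zero]
    intro p
    simpa [Z] using sub_ne_zero.2 (circleMap_ne_mem_ball hz p.1)
  have hunW : ∀ z ∈ Metric.ball b r2, IsUnit (W - z • (1 : C(IccPi × IccPi, ℂ))) := by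
    intro z hz
    rw [ContinuousMap.isUnit_iff_forall_ne_zero]
    intro p
    simpa [W] using sub_ne_zero.2 (circleMap_ne_mem_ball hz p.2)
  have hinv : ∀ (φ : C(IccPi × IccPi, ℂ)), IsUnit φ → ∀ p, Ring.inverse φ p = (φ p)⁻¹ := by
    intro φ hφ p
    have := congrArg (fun ψ : C(IccPi × IccPi, ℂ) => ψ p) (Ring.inverse_mul_cancel φ hφ)
    exact eq_inv_of_mul_eq_one_left this
  let Ψ : ℂ × ℂ → ℂ := fun p => torusCLM (k * (Ring.inverse (Z - p.1 • (1 : C(IccPi × IccPi, ℂ))) *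
      Ring.inverse (W - p.2 • (1 : C(IccPi × IccPi, ℂ)))))
  have hΨ : AnalyticAt ℂ Ψ (a, b) := by
    have e1 : AnalyticAt ℂ (fun p : ℂ × ℂ => Ring.inverse (Z - p.1 • (1 : C(IccPi × IccPi, ℂ)))) (a, b) := by
      have := analyticAt_inverse (𝕜 := ℂ) (hunZ a (Metric.mem_ball_self hr1)).unit
      refine AnalyticAt.comp_of_eq (f := fun p : ℂ × ℂ => Z - p.1 • (1 : C(IccPi × IccPi, ℂ))) this ?_ rfl
      exact analyticAt_const.sub (analyticAt_fst.smul analyticAt_const)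
    have e2 : AnalyticAt ℂ (fun p : ℂ × ℂ => Ring.inverse (W - p.2 • (1 : C(IccPi × IccPi, ℂ)))) (a, b) := by
      have := analyticAt_inverse (𝕜 := ℂ) (hunW b (Metric.mem_ball_self hr2)).unit
      refine AnalyticAt.comp_of_eq (f := fun p : ℂ × ℂ => W - p.2 • (1 : C(IccPi × IccPi, ℂ))) this ?_ rfl
      exact analyticAt_const.sub (analyticAt_snd.smul analyticAt_const)
    exact (torusCLM.analyticAt _).comp (analyticAt_const.mul (e1.mul e2))
  refine hΨ.congr ?_
  have hn : (Metric.ball a r1 ×ˢ Metric.ball b r2) ∈ nhds (a, b) :=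
      prod_mem_nhds (Metric.ball_mem_nhds _ hr1) (Metric.ball_mem_nhds _ hr2)
  filter_upwards [hn] with p hp
  obtain ⟨z, w⟩ := p
  obtain ⟨hz, hw⟩ := hp
  simp only at hz hw
  have c1 := ((h1 w (hr2T (Metric.ball_subset_closedBall hw))).mono hr1S).circleIntegral_sub_inv_smul hz
  have c2 : ∀ s, _ := fun s => ((h2 _ (hcS s)).mono hr2T).circleIntegral_sub_inv_smul hw
  rw [show Ψ (z, w) = _ from torusCLM_apply _ (fun s t =>
    (2 * Real.pi * I : ℂ)⁻¹ * (deriv (circleMap a r1) s * (circleMap a r1 s - z)⁻¹) *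
     ((2 * Real.pi * I : ℂ)⁻¹ * (deriv (circleMap b r2) t • ((circleMap b r2 t - w)⁻¹ •
      f (circleMap a r1 s, circleMap b r2 t)))))
    (by
      intro p
      simp only [ContinuousMap.mul_apply, hinv _ (hunZ z hz), hinv _ (hunW w hw)]
      simp [k, Z, W]
      ring)]
  simp only [intervalIntegral.integral_const_mul]
  simp only [circleIntegral] at c1 c2
  simp only [c2]
  have hpi : (2 * Real.pi * I : ℂ) ≠ 0 := Complex.two_pi_I_ne_zero
  simp only [smul_eq_mul, inv_mul_cancel_left₀ hpi] at c1 ⊢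
  simp only [mul_assoc, intervalIntegral.integral_const_mul] at c1 ⊢
  rw [c1]
  field_simp

lemma posLog_submean {h : ℂ → ℂ} {z : ℂ} {r : ℝ} (hr : 0 < r)
    (hh : AnalyticOnNhd ℂ h (Metric.closedBall z r)) :
    Real.posLog ‖h z‖ ≤ Real.circleAverage (fun x => Real.posLog ‖h x‖) z r := by
  have hcont : ContinuousOn (fun x => Real.posLog ‖h x‖) (Metric.sphere z r) :=
    Real.continuous_posLog.comp_continuousOn
      (hh.continuousOn.mono Metric.sphere_subset_closedBall).norm
  have hint : CircleIntegrable (fun x => Real.posLog ‖h x‖) z r := hcont.circleIntegrable hr.le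
  have hnn : 0 ≤ Real.circleAverage (fun x => Real.posLog ‖h x‖) z r :=
    Real.circleAverage_nonneg_of_nonneg (fun x _ => Real.posLog_nonneg)
  rw [Real.posLog_apply]
  refine max_le hnn ?_
  by_cases hz : h z = 0
  · simpa [hz] using hnn
  have habs : |r| = r := abs_of_pos hr
  have hh' : AnalyticOnNhd ℂ h (Metric.closedBall z |r|) := by rwa [habs]
  have J := hh'.circleAverage_log_norm hr.ne' hz
  have hle : Real.circleAverage (Real.log ‖h ·‖) z r ≤
      Real.circleAverage (fun x => Real.posLog ‖h x‖) z r := by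
    refine Real.circleAverage_mono ?_ hint (fun x _ => ?_)
    · exact (hh'.mono Metric.sphere_subset_closedBall).meromorphicOn.circleIntegrable_log_norm
    · exact le_max_right _ _
  have hsum : 0 ≤ ∑ᶠ u, (MeromorphicOn.divisor h (Metric.closedBall z |r|) u : ℝ) *
      Real.log (r * ‖z - u‖⁻¹) := by
    refine finsum_nonneg fun u => ?_
    by_cases hu : u ∈ Metric.closedBall z |r|
    · refine mul_nonneg ?_ ?_
      · exact_mod_cast (MeromorphicOn.AnalyticOnNhd.divisor_nonneg hh') u
      · by_cases hzu : ‖z - u‖ = 0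
        · simp [hzu]
        · refine Real.log_nonneg ?_
          rw [← div_eq_mul_inv, one_le_div (by positivity)]
          rw [habs, Metric.mem_closedBall, dist_comm, dist_eq_norm] at hu
          exact hu
    · simp [hu]
  linarith

lemma posLog_submean_lintegral {h : ℂ → ℂ} {z : ℂ} {r : ℝ} (hr : 0 < r)
    (hh : AnalyticOnNhd ℂ h (Metric.closedBall z r)) (c : ℝ) (hc : 0 ≤ c) :
    ENNReal.ofReal (Real.posLog ‖h z‖ / c) * ENNReal.ofReal (2 * Real.pi) ≤
      ∫⁻ θ in Set.Ioo (-Real.pi) Real.pi,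
        ENNReal.ofReal (Real.posLog ‖h (circleMap z r θ)‖ / c) := by
  have hcont : Continuous (fun θ => Real.posLog ‖h (circleMap z r θ)‖) := by
    have : Continuous (fun θ => h (circleMap z r θ)) :=
      hh.continuousOn.comp_continuous (continuous_circleMap z r)
        (fun θ => circleMap_mem_closedBall z hr.le θ)
    exact Real.continuous_posLog.comp this.norm
  have hs := posLog_submean hr hh
  rw [Real.circleAverage_def, smul_eq_mul, le_inv_mul_iff₀ Real.two_pi_pos] at hs
  have hper : Function.Periodic (fun θ => Real.posLog ‖h (circleMap z r θ)‖) (2 * Real.pi) := by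
    intro θ
    simp [periodic_circleMap z r θ]
  have e := hper.intervalIntegral_add_eq 0 (-Real.pi)
  rw [zero_add, show -Real.pi + 2 * Real.pi = Real.pi by ring] at e
  rw [e] at hs
  rw [← MeasureTheory.ofReal_integral_eq_lintegral_ofReal, ← ENNReal.ofReal_mul
    (div_nonneg Real.posLog_nonneg hc)]
  · apply ENNReal.ofReal_le_ofReal
    rw [← MeasureTheory.integral_Ioc_eq_integral_Ioo,
      ← intervalIntegral.integral_of_le (by linarith [Real.pi_pos]),
      intervalIntegral.integral_div, div_mul_eq_mul_div]
    gcongr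
    rwa [mul_comm]
  · exact ((hcont.div_const c).integrableOn_Icc (a := -Real.pi) (b := Real.pi)).mono_set
      Set.Ioo_subset_Icc_self
  · exact Filter.Eventually.of_forall fun θ => div_nonneg Real.posLog_nonneg hc

lemma area_submean {φ : ℂ → ℝ≥0∞} (hφ : Measurable φ) (z : ℂ) (R : ℝ) (C : ℝ≥0∞)
    (h : ∀ r, 0 < r → r < R → C ≤ ∫⁻ θ in Set.Ioo (-Real.pi) Real.pi, φ (circleMap z r θ)) :
    C * (∫⁻ r in Set.Ioo 0 R, ENNReal.ofReal r) ≤ ∫⁻ x, φ x := by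
  have e1 : ∫⁻ x, φ x = ∫⁻ x, φ (z + x) := (MeasureTheory.lintegral_add_left_eq_self φ z).symm
  rw [e1, ← Complex.lintegral_comp_polarCoord_symm, polarCoord_target,
    MeasureTheory.Measure.volume_eq_prod, ← MeasureTheory.Measure.prod_restrict]
  have hcm : ∀ p : ℝ × ℝ, z + Complex.polarCoord.symm p = circleMap z p.1 p.2 := by
    intro p
    rw [Complex.polarCoord_symm_apply, circleMap, Complex.exp_mul_I]
    simp
  simp only [hcm]
  have hm : Measurable fun p : ℝ × ℝ => circleMap z p.1 p.2 := by
    unfold circleMap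
    fun_prop
  rw [MeasureTheory.lintegral_prod _ (by
    apply Measurable.aemeasurable
    exact (ENNReal.measurable_ofReal.comp measurable_fst).smul (hφ.comp hm))]
  calc C * (∫⁻ r in Set.Ioo 0 R, ENNReal.ofReal r)
      = ∫⁻ r in Set.Ioo 0 R, C * ENNReal.ofReal r :=
        (MeasureTheory.lintegral_const_mul _ ENNReal.measurable_ofReal).symm
    _ ≤ ∫⁻ r in Set.Ioo 0 R, ∫⁻ θ in Set.Ioo (-Real.pi) Real.pi,
          ENNReal.ofReal r • φ (circleMap z r θ) := by
        refine MeasureTheory.setLIntegral_mono' measurableSet_Ioo fun r hr => ?_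
        simp only [smul_eq_mul]
        rw [MeasureTheory.lintegral_const_mul (f := fun θ => φ (circleMap z r θ)) _
          (hφ.comp (continuous_circleMap z r).measurable), mul_comm]
        gcongr
        exact h r hr.1 hr.2
    _ ≤ _ := MeasureTheory.lintegral_mono_set Set.Ioo_subset_Ioi_self

lemma hartogs_lemma {a : ℂ} {R : ℝ} (hR : 0 < R) (g : ℕ → ℂ → ℂ)
    (hg : ∀ n, DifferentiableOn ℂ (g n) (Metric.ball a (2 * R))) (C : ℝ)
    (hb : ∀ n, ∀ z ∈ Metric.ball a (2 * R), Real.posLog ‖g n z‖ / n ≤ C)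
    (hp : ∀ z ∈ Metric.ball a (2 * R),
      Filter.Tendsto (fun n : ℕ => Real.posLog ‖g n z‖ / n) Filter.atTop (nhds 0))
    (ε : ℝ) (hε : 0 < ε) :
    ∀ᶠ n : ℕ in Filter.atTop, ∀ z ∈ Metric.ball a R, Real.posLog ‖g n z‖ / n ≤ ε := by
  set D := Metric.ball a (2 * R) with hD
  let φ : ℕ → ℂ → ℝ≥0∞ := fun n => D.indicator fun z => ENNReal.ofReal (Real.posLog ‖g n z‖ / n)
  have hDm : MeasurableSet D := measurableSet_ball
  have hφm : ∀ n, Measurable (φ n) := by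
    intro n
    have hc : ContinuousOn (fun z => ENNReal.ofReal (Real.posLog ‖g n z‖ / n)) D :=
      ENNReal.continuous_ofReal.comp_continuousOn
        ((Real.continuous_posLog.comp_continuousOn (hg n).continuousOn.norm).div_const _)
    classical
    have := hc.measurable_piecewise (g := 0) continuousOn_const hDm
    rwa [Set.piecewise_eq_indicator] at this
  have hlim : Filter.Tendsto (fun n => ∫⁻ z, φ n z) Filter.atTop (nhds (∫⁻ _ : ℂ, 0)) := by
    refine MeasureTheory.tendsto_lintegral_of_dominated_convergence
      (D.indicator fun _ => ENNReal.ofReal C) hφm ?_ ?_ ?_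
    · intro n
      refine Filter.Eventually.of_forall fun z => ?_
      by_cases hz : z ∈ D
      · simp only [φ, Set.indicator_of_mem hz]
        exact ENNReal.ofReal_le_ofReal (hb n z hz)
      · simp [φ, hz]
    · rw [MeasureTheory.lintegral_indicator hDm]
      simp only [MeasureTheory.lintegral_const, MeasureTheory.Measure.restrict_apply_univ]
      exact ENNReal.mul_ne_top ENNReal.ofReal_ne_top MeasureTheory.measure_ball_lt_top.ne
    · refine Filter.Eventually.of_forall fun z => ?_
      by_cases hz : z ∈ D
      · simp only [φ, Set.indicator_of_mem hz]
        simpa using ENNReal.tendsto_ofReal (hp z hz)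
      · simp [φ, hz]
  set K : ℝ≥0∞ := ENNReal.ofReal (2 * Real.pi) * ∫⁻ r in Set.Ioo 0 R, ENNReal.ofReal r with hK
  have hK0 : K ≠ 0 := by
    refine mul_ne_zero (by simpa using Real.pi_pos) ?_
    refine (MeasureTheory.setLIntegral_pos_iff ENNReal.measurable_ofReal).2 ?_ |>.ne'
    have : Set.Ioo 0 R ⊆ (Function.support ENNReal.ofReal ∩ Set.Ioo 0 R) := by
      intro x hx
      exact ⟨by simpa using hx.1, hx⟩
    refine lt_of_lt_of_le ?_ (MeasureTheory.measure_mono this)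
    simpa using hR
  simp only [MeasureTheory.lintegral_zero] at hlim
  have hpos : 0 < ENNReal.ofReal ε * K :=
    pos_iff_ne_zero.2 (mul_ne_zero (by simpa using hε) hK0)
  filter_upwards [hlim.eventually (gt_mem_nhds hpos)] with n hn z hz
  have hsub : Metric.ball z R ⊆ D := Metric.ball_subset_ball' (by
    rw [Metric.mem_ball] at hz; linarith)
  have hs := area_submean (hφm n) z R
    (ENNReal.ofReal (Real.posLog ‖g n z‖ / n) * ENNReal.ofReal (2 * Real.pi)) (by
      intro r hr0 hrR
      have han : AnalyticOnNhd ℂ (g n) (Metric.closedBall z r) :=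
        ((hg n).analyticOnNhd Metric.isOpen_ball).mono
          ((Metric.closedBall_subset_ball hrR).trans hsub)
      refine (posLog_submean_lintegral hr0 han n (Nat.cast_nonneg n)).trans_eq ?_
      refine MeasureTheory.lintegral_congr fun θ => ?_
      have : circleMap z r θ ∈ D := hsub (Metric.closedBall_subset_ball hrR
        (circleMap_mem_closedBall z hr0.le θ))
      simp only [φ, Set.indicator_of_mem this])
  rw [mul_assoc, ← hK] at hs
  have := lt_of_mul_lt_mul_right' (hs.trans_lt hn)
  exact ((ENNReal.ofReal_lt_ofReal_iff hε).1 this).le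

lemma analytic_iteratedDeriv_snd {S T : Set ℂ} (hS : IsOpen S) (hT : IsOpen T) (f : ℂ × ℂ → ℂ)
    (hf : AnalyticOnNhd ℂ f (S ×ˢ T)) (n : ℕ) :
    AnalyticOnNhd ℂ (fun p : ℂ × ℂ => iteratedDeriv n (fun w => f (p.1, w)) p.2) (S ×ˢ T) := by
  induction n with
  | zero => simpa using hf
  | succ n ih =>
    have h := ih.fderiv
    have h' : AnalyticOnNhd ℂ (fun p : ℂ × ℂ => fderiv ℂ (fun p : ℂ × ℂ =>
        iteratedDeriv n (fun w => f (p.1, w)) p.2) p ((0 : ℂ), (1 : ℂ))) (S ×ˢ T) :=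
      fun p hp =>
        ((ContinuousLinearMap.apply ℂ ℂ ((0 : ℂ), (1 : ℂ))).analyticAt _).comp (h p hp)
    refine h'.congr (hS.prod hT) fun p hp => ?_
    have hd := (ih p hp).differentiableAt.hasFDerivAt
    have hc : HasDerivAt (fun w : ℂ => (p.1, w)) ((0 : ℂ), (1 : ℂ)) p.2 :=
      (hasDerivAt_const p.2 p.1).prodMk (hasDerivAt_id p.2)
    have := hd.comp_hasDerivAt p.2 hc
    simp only [iteratedDeriv_succ]
    exact this.deriv.symm

lemma hartogs_core (f : ℂ × ℂ → ℂ) (a b : ℂ) (R r M : ℝ) (hR : 0 < R) (hr : 0 < r) (T : Set ℂ)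
    (hT : Metric.closedBall b (2 * R) ⊆ T) (hrT : Metric.ball b r ⊆ T)
    (h1 : ∀ w ∈ T, DifferentiableOn ℂ (fun z => f (z, w)) (Metric.ball a (2 * R)))
    (h2 : ∀ z ∈ Metric.ball a (2 * R), DifferentiableOn ℂ (fun w => f (z, w)) T)
    (hM : ∀ z ∈ Metric.ball a (2 * R), ∀ w ∈ Metric.ball b r, ‖f (z, w)‖ ≤ M) :
    ∃ A : ℝ, ∀ z ∈ Metric.ball a R, ∀ w ∈ Metric.ball b (3 * R / 2), ‖f (z, w)‖ ≤ A := by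
  have hM0 : 0 ≤ M := (norm_nonneg _).trans
    (hM a (Metric.mem_ball_self (by positivity)) b (Metric.mem_ball_self hr))
  have han := osgood Metric.isOpen_ball Metric.isOpen_ball f M
    (fun w hw => h1 w (hrT hw)) (fun z hz => (h2 z hz).mono hrT) hM
  let g : ℕ → ℂ → ℂ := fun n z =>
    iteratedDeriv n (fun w => f (z, w)) b * ((2 * R : ℂ) ^ n * (n.factorial : ℂ)⁻¹)
  have hg : ∀ n, DifferentiableOn ℂ (g n) (Metric.ball a (2 * R)) := by
    intro n z hz
    have h := analytic_iteratedDeriv_snd Metric.isOpen_ball Metric.isOpen_ball f han n (z, b)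
      ⟨hz, Metric.mem_ball_self hr⟩
    have h' : DifferentiableAt ℂ (fun z : ℂ => iteratedDeriv n (fun w => f (z, w)) b) z :=
      h.differentiableAt.comp z (f := fun z : ℂ => (z, b)) (by fun_prop)
    exact (h'.mul_const _).differentiableWithinAt
  have hnorm : ∀ n z (C s : ℝ), 0 < s →
      ‖iteratedDeriv n (fun w => f (z, w)) b‖ ≤ n.factorial * C / s ^ n →
      ‖g n z‖ ≤ C * (2 * R / s) ^ n := by
    intro n z C s hs h
    have hfac : (0 : ℝ) < n.factorial := by exact_mod_cast n.factorial_pos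
    simp only [g, norm_mul, norm_pow, norm_inv, Complex.norm_natCast, Complex.norm_real,
      Real.norm_eq_abs, abs_of_pos hR, Complex.norm_ofNat]
    calc _ ≤ (n.factorial * C / s ^ n) * ((2 * R) ^ n * (n.factorial : ℝ)⁻¹) := by gcongr
      _ = _ := by rw [div_pow]; field_simp
  set B : ℝ := 2 * R / (r / 2) with hB
  have hB0 : 0 ≤ B := by positivity
  have hb1 : ∀ n, ∀ z ∈ Metric.ball a (2 * R), ‖g n z‖ ≤ M * B ^ n := by
    intro n z hz
    have hsub : Metric.closedBall b (r / 2) ⊆ Metric.ball b r :=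
      Metric.closedBall_subset_ball (by linarith)
    refine hnorm n z M (r / 2) (by positivity) ?_
    refine Complex.norm_iteratedDeriv_le_of_forall_mem_sphere_norm_le n (by positivity) ?_ ?_
    · refine DifferentiableOn.diffContOnCl ((h2 z hz).mono ?_)
      exact (Metric.closure_ball_subset_closedBall.trans hsub).trans hrT
    · exact fun w hw => hM z hz w (hsub (Metric.sphere_subset_closedBall hw))
  have hb2 : ∀ z ∈ Metric.ball a (2 * R), ∃ C : ℝ, ∀ n, ‖g n z‖ ≤ C := by
    intro z hz
    obtain ⟨C, hC⟩ := (isCompact_closedBall b (2 * R)).exists_bound_of_continuousOn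
      ((h2 z hz).mono hT).continuousOn
    refine ⟨C, fun n => ?_⟩
    have := hnorm n z C (2 * R) (by positivity) (by
      refine Complex.norm_iteratedDeriv_le_of_forall_mem_sphere_norm_le n (by positivity) ?_ ?_
      · refine DifferentiableOn.diffContOnCl ((h2 z hz).mono ?_)
        exact Metric.closure_ball_subset_closedBall.trans hT
      · exact fun w hw => hC w (Metric.sphere_subset_closedBall hw))
    rwa [div_self (by positivity), one_pow, mul_one] at this
  have hev := hartogs_lemma hR g hg (Real.posLog M + Real.posLog B) (by
    intro n z hz
    rcases Nat.eq_zero_or_pos n with rfl | hn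
    · simpa using add_nonneg Real.posLog_nonneg Real.posLog_nonneg
    have hn' : (1 : ℝ) ≤ n := by exact_mod_cast hn
    rw [div_le_iff₀ (by positivity)]
    have e1 := Real.posLog_le_posLog (norm_nonneg _) (hb1 n z hz)
    have e2 := Real.posLog_mul (x := M) (y := B ^ n)
    rw [Real.posLog_pow] at e2
    nlinarith [Real.posLog_nonneg (x := M)]) (by
    intro z hz
    obtain ⟨C, hC⟩ := hb2 z hz
    refine squeeze_zero (fun n => div_nonneg Real.posLog_nonneg (Nat.cast_nonneg n))
      (fun n => div_le_div_of_nonneg_right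
        (Real.posLog_le_posLog (norm_nonneg _) (hC n)) (Nat.cast_nonneg n)) ?_
    exact tendsto_const_div_atTop_nhds_zero_nat _) (Real.log (5 / 4)) (Real.log_pos (by norm_num))
  obtain ⟨N, hN⟩ := Filter.eventually_atTop.1 hev
  set A : ℝ := 1 + ∑ n ∈ Finset.range (N + 1), M * B ^ n with hA
  have hsum0 : 0 ≤ ∑ n ∈ Finset.range (N + 1), M * B ^ n :=
    Finset.sum_nonneg fun n _ => by positivity
  have hgA : ∀ n, ∀ z ∈ Metric.ball a R, ‖g n z‖ ≤ A * (5 / 4) ^ n := by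
    intro n z hz
    have hz2 : z ∈ Metric.ball a (2 * R) := Metric.ball_subset_ball (by linarith) hz
    have hp1 : (1 : ℝ) ≤ (5 / 4) ^ n := one_le_pow₀ (by norm_num)
    by_cases hn : n < N + 1
    · have e1 : M * B ^ n ≤ ∑ n ∈ Finset.range (N + 1), M * B ^ n :=
        Finset.single_le_sum (f := fun n => M * B ^ n) (fun n _ => by positivity)
          (Finset.mem_range.2 hn)
      have := hb1 n z hz2
      nlinarith
    · have h := hN n (by omega) z hz
      have hn0 : (0 : ℝ) < n := by exact_mod_cast (by omega : 0 < n)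
      rw [div_le_iff₀ hn0] at h
      have h5 : ‖g n z‖ ≤ (5 / 4) ^ n := by
        rcases (norm_nonneg (g n z)).eq_or_lt with h0 | h0
        · rw [← h0]; positivity
        · rw [← Real.log_le_log_iff h0 (by positivity), Real.log_pow, mul_comm]
          exact (le_max_right _ _).trans h
      nlinarith
  refine ⟨A * (1 - 15 / 16)⁻¹, fun z hz w hw => ?_⟩
  have hz2 : z ∈ Metric.ball a (2 * R) := Metric.ball_subset_ball (by linarith) hz
  have hs := Complex.hasSum_taylorSeries_on_ball (c := b) (r := 2 * R) (z := w)
    ((h2 z hz2).mono (Metric.ball_subset_closedBall.trans hT))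
    (Metric.ball_subset_ball (by linarith) hw)
  have hgeo : HasSum (fun n : ℕ => A * (15 / 16 : ℝ) ^ n) (A * (1 - 15 / 16)⁻¹) :=
    (hasSum_geometric_of_lt_one (by norm_num) (by norm_num)).mul_left A
  refine hs.norm_le_of_bounded hgeo fun n => ?_
  have hR0 : (2 * R : ℂ) ≠ 0 := by
    have : (R : ℂ) ≠ 0 := by exact_mod_cast hR.ne'
    simpa using this
  have e : ((n.factorial : ℂ)⁻¹ • (w - b) ^ n • iteratedDeriv n (fun w => f (z, w)) b) =
      g n z * ((w - b) / (2 * R)) ^ n := by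
    simp only [g, smul_eq_mul, div_pow]
    field_simp
  rw [e, norm_mul, norm_pow]
  have hw' : ‖(w - b) / (2 * R : ℂ)‖ ≤ 3 / 4 := by
    rw [norm_div, norm_mul, Complex.norm_real, Real.norm_eq_abs, abs_of_pos hR,
      Complex.norm_ofNat, div_le_iff₀ (by positivity), ← dist_eq_norm]
    have := Metric.mem_ball.1 hw
    linarith
  calc ‖g n z‖ * ‖(w - b) / (2 * R : ℂ)‖ ^ n ≤ (A * (5 / 4) ^ n) * (3 / 4) ^ n := by
        gcongr
        exact hgA n z hz
    _ = A * (15 / 16) ^ n := by rw [mul_assoc, ← mul_pow]; norm_num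

lemma hartogs {S T : Set ℂ} (hS : IsOpen S) (hT : IsOpen T) (f : ℂ × ℂ → ℂ)
    (h1 : ∀ w ∈ T, DifferentiableOn ℂ (fun z => f (z, w)) S)
    (h2 : ∀ z ∈ S, DifferentiableOn ℂ (fun w => f (z, w)) T) : AnalyticOnNhd ℂ f (S ×ˢ T) := by
  rintro ⟨a, b⟩ ⟨ha, hb⟩
  simp only at ha hb
  obtain ⟨r1, hr1, hr1S⟩ := Metric.nhds_basis_closedBall.mem_iff.1 (hS.mem_nhds ha)
  obtain ⟨r2, hr2, hr2T⟩ := Metric.nhds_basis_closedBall.mem_iff.1 (hT.mem_nhds hb)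
  obtain ⟨R, hR, hRS, hRT⟩ : ∃ R : ℝ, 0 < R ∧ Metric.closedBall a (3 * R) ⊆ S ∧
      Metric.closedBall b (3 * R) ⊆ T := by
    refine ⟨min r1 r2 / 3, by positivity, ?_, ?_⟩
    · refine (Metric.closedBall_subset_closedBall ?_).trans hr1S
      linarith [min_le_left r1 r2]
    · refine (Metric.closedBall_subset_closedBall ?_).trans hr2T
      linarith [min_le_right r1 r2]
  have hR2S : Metric.closedBall a (2 * R) ⊆ S :=
    (Metric.closedBall_subset_closedBall (by linarith)).trans hRS
  have hR1T : Metric.closedBall b R ⊆ T :=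
    (Metric.closedBall_subset_closedBall (by linarith)).trans hRT
  let E : ℕ → Set (Metric.closedBall b R) := fun m =>
    {w | ∀ z ∈ Metric.closedBall a (2 * R), ‖f (z, w)‖ ≤ m}
  have hEc : ∀ m, IsClosed (E m) := by
    intro m
    simp only [E, Set.ofPred_forall]
    refine isClosed_iInter fun z => isClosed_iInter fun hz => ?_
    refine isClosed_le ?_ continuous_const
    have := ((h2 z (hR2S hz)).mono hR1T).continuousOn
    exact (continuousOn_iff_continuous_domRestrict.1 this).norm
  have hEu : ⋃ m, E m = Set.univ := by
    refine Set.eq_univ_of_forall fun w => ?_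
    obtain ⟨C, hC⟩ := (isCompact_closedBall a (2 * R)).exists_bound_of_continuousOn
      ((h1 w (hR1T w.2)).mono hR2S).continuousOn
    obtain ⟨m, hm⟩ := exists_nat_ge C
    exact Set.mem_iUnion.2 ⟨m, fun z hz => (hC z hz).trans hm⟩
  have : Nonempty (Metric.closedBall b R) := ⟨⟨b, Metric.mem_closedBall_self hR.le⟩⟩
  have : CompleteSpace (Metric.closedBall b R) := Metric.isClosed_closedBall.completeSpace_coe
  obtain ⟨m, x, hx⟩ := nonempty_interior_of_iUnion_of_closed hEc hEu
  obtain ⟨δ, hδ, hδE⟩ := Metric.mem_nhds_iff.1 (mem_interior_iff_mem_nhds.1 hx)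
  have hxc : (x : ℂ) ∈ closure (Metric.ball b R) := by
    rw [closure_ball b hR.ne']; exact x.2
  obtain ⟨b', hb', hb'x⟩ := Metric.mem_closure_iff.1 hxc δ hδ
  obtain ⟨r, hr, hrsub⟩ := Metric.isOpen_iff.1
    (Metric.isOpen_ball.inter Metric.isOpen_ball : IsOpen (Metric.ball b R ∩ Metric.ball (x : ℂ) δ))
    b' ⟨hb', by rwa [Metric.mem_ball, dist_comm]⟩
  have hbb := Metric.mem_ball.1 hb'
  obtain ⟨A, hA⟩ := hartogs_core f a b' R r m hR hr T
    ((Metric.closedBall_subset_closedBall' (by linarith)).trans hRT)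
    (fun w hw => hR1T (Metric.ball_subset_closedBall (hrsub hw).1))
    (fun w hw => (h1 w hw).mono (Metric.ball_subset_closedBall.trans hR2S))
    (fun z hz => h2 z (hR2S (Metric.ball_subset_closedBall hz)))
    (fun z hz w hw => hδE (a := ⟨w, Metric.ball_subset_closedBall (hrsub hw).1⟩) (hrsub hw).2 z
      (Metric.ball_subset_closedBall hz))
  have hsub : Metric.ball b (R / 2) ⊆ Metric.ball b' (3 * R / 2) :=
    Metric.ball_subset_ball' (by rw [dist_comm]; linarith)
  have hSa : Metric.ball a R ⊆ S :=
    (Metric.ball_subset_closedBall.trans (Metric.closedBall_subset_closedBall (by linarith))).trans hR2S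
  have hTb : Metric.ball b (R / 2) ⊆ T :=
    (Metric.ball_subset_closedBall.trans (Metric.closedBall_subset_closedBall (by linarith))).trans hR1T
  exact osgood Metric.isOpen_ball Metric.isOpen_ball f A
    (fun w hw => (h1 w (hTb hw)).mono hSa) (fun z hz => (h2 z (hSa hz)).mono hTb)
    (fun z hz w hw => hA z hz w (hsub hw)) (a, b)
    ⟨Metric.mem_ball_self hR, Metric.mem_ball_self (by positivity)⟩

/-- If `F` is separately holomorphic on `U × U` and `V ⊆ ℂ` is open containing the
reals with `exp(iV) ⊆ U`, then `(θ₁,θ₂) ↦ F(e^{iθ₁}, e^{iθ₂})` is holomorphic on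
`V × V` and its restriction to `ℝ²` is real-analytic. -/
theorem stmt_11 (U V : Set ℂ) (hU : IsOpen U) (hV : IsOpen V)
    (hRV : ∀ x : ℝ, (x : ℂ) ∈ V) (hVU : ∀ z ∈ V, Complex.exp (Complex.I * z) ∈ U)
    (F : ℂ × ℂ → ℂ)
    (hF₁ : ∀ z₂ ∈ U, DifferentiableOn ℂ (fun z₁ => F (z₁, z₂)) U)
    (hF₂ : ∀ z₁ ∈ U, DifferentiableOn ℂ (fun z₂ => F (z₁, z₂)) U) :
    DifferentiableOn ℂ
      (fun p : ℂ × ℂ => F (Complex.exp (Complex.I * p.1), Complex.exp (Complex.I * p.2)))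
      (V ×ˢ V) ∧
    AnalyticOn ℝ
      (fun p : ℝ × ℝ =>
        F (Complex.exp (Complex.I * p.1), Complex.exp (Complex.I * p.2)))
      Set.univ := by
  have hF := hartogs hU hU F hF₁ hF₂
  have key : AnalyticOnNhd ℂ
      (fun p : ℂ × ℂ => F (Complex.exp (Complex.I * p.1), Complex.exp (Complex.I * p.2)))
      (V ×ˢ V) := by
    rintro p ⟨hp1, hp2⟩
    refine AnalyticAt.fun_comp (f := fun p : ℂ × ℂ =>
      (Complex.exp (Complex.I * p.1), Complex.exp (Complex.I * p.2)))
      (hF _ ⟨hVU _ hp1, hVU _ hp2⟩) ?_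
    exact (analyticAt_const.mul analyticAt_fst).cexp.prod
      (analyticAt_const.mul analyticAt_snd).cexp
  refine ⟨key.differentiableOn, fun p _ => AnalyticAt.analyticWithinAt ?_⟩
  have hk : AnalyticAt ℝ
      (fun p : ℂ × ℂ => F (Complex.exp (Complex.I * p.1), Complex.exp (Complex.I * p.2)))
      ((p.1 : ℂ), (p.2 : ℂ)) := (key _ ⟨hRV p.1, hRV p.2⟩).restrictScalars
  refine AnalyticAt.fun_comp (f := fun p : ℝ × ℝ => ((p.1 : ℂ), (p.2 : ℂ))) hk ?_
  exact ((Complex.ofRealCLM.analyticAt _).comp analyticAt_fst).prod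
    ((Complex.ofRealCLM.analyticAt _).comp analyticAt_snd)
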